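/- Fix $n\geq 2$, $0<\rho<\sigma<\infty$, and $v\in L^1(B_\sigma)$ where $B_r\subset\mathbb{R}^n$ is the ball of radius $r$ centered at the origin. Define $J(\rho,\sigma,v):=\inf\{\int_{B_\sigma}|v|\,|\nabla\eta|^2\,dx : \eta\in C_0^1(B_\sigma),\ \eta\geq 0,\ \eta=1\text{ on }B_\rho\}$. Then for every $\delta\in(0,1]$, $J(\rho,\sigma,v)\leq (\sigma-\rho)^{-(1+1/\delta)}\big(\int_\rho^\sigma \big(\int_{S_r}|v|\,d\mathcal{H}^{n-1}\big)^\delta\,dr\big)^{1/\delta}$, where $S_r=\{x:|x|=r\}$. -/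

import Mathlib

open MeasureTheory Metric

section helpers
open Set
open scoped ENNReal NNReal



section polar
variable {E : Type*} [NormedAddCommGroup E] [InnerProductSpace ℝ E] [FiniteDimensional ℝ E]
  [MeasurableSpace E] [BorelSpace E] {n : ℕ}

/-- the polar coordinates formula -/
lemma oc_polar (hfr : Module.finrank ℝ E = n) (hn : 2 ≤ n) (f : E → ℝ≥0∞) (hf : Measurable f) :
    ∫⁻ x, f x = ∫⁻ r in Ioi (0:ℝ), ENNReal.ofReal (r ^ (n-1)) *
      ∫⁻ ω : sphere (0 : E) 1, f (r • (ω : E))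
        ∂(volume : Measure (E)).toSphere := by
  have : Nontrivial E := by
    apply Module.nontrivial_of_finrank_pos (R := ℝ)
    omega
  have hmp := (volume : Measure E).measurePreserving_homeomorphUnitSphereProd
  have h1 : ∫⁻ x, f x = ∫⁻ x : ({0}ᶜ : Set E), f x ∂(Measure.comap Subtype.val volume) := by
    rw [lintegral_subtype_comap (measurableSet_singleton _).compl, restrict_compl_singleton]
  have hg : Measurable (fun p : sphere (0:E) 1 × Ioi (0:ℝ) => f (p.2.1 • p.1.1)) := by
    apply hf.comp; fun_prop
  have h2 : ∫⁻ x : ({0}ᶜ : Set E), f x ∂(Measure.comap Subtype.val volume) =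
      ∫⁻ p : sphere (0:E) 1 × Ioi (0:ℝ), f (p.2.1 • p.1.1)
        ∂((volume : Measure E).toSphere.prod (.volumeIoiPow (Module.finrank ℝ E - 1))) := by
    rw [← hmp.lintegral_comp hg]
    apply lintegral_congr
    intro x
    congr 1
    have := (homeomorphUnitSphereProd E).symm_apply_apply x
    conv_lhs => rw [← this]
    rfl
  rw [h1, h2, lintegral_prod_symm' _ hg, hfr, Measure.volumeIoiPow,
    lintegral_withDensity_eq_lintegral_mul₀]
  · simp only [Pi.mul_apply]
    rw [← lintegral_subtype_comap measurableSet_Ioi]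
  · fun_prop
  · exact (hg.lintegral_prod_left').aemeasurable

lemma oc_shell (hfr : Module.finrank ℝ E = n) (hn : 2 ≤ n) (A : Set (sphere (0 : E) 1))
    (hA : MeasurableSet A) (I : Set ℝ) (hI : MeasurableSet I) (hI0 : I ⊆ Ioi 0)
    (K : Set (E))
    (hK : K = (fun p : ℝ × sphere (0 : E) 1 => p.1 • p.2.1) '' (I ×ˢ A)) :
    MeasurableSet K ∧ volume K = (∫⁻ r in I, ENNReal.ofReal (r ^ (n-1))) *
      (volume : Measure (E)).toSphere A := by
  have hmem : ∀ r : ℝ, 0 < r → ∀ ω : sphere (0:E) 1, r • ω.1 ∈ K ↔ r ∈ I ∧ ω ∈ A := by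
    intro r hr ω
    rw [hK]
    constructor
    · rintro ⟨⟨r', ω'⟩, ⟨h1, h2⟩, h3⟩
      simp only at h1 h2 h3
      have hr' : 0 < r' := hI0 h1
      have e1 : r' = r := by
        have := congrArg norm h3
        simpa [norm_smul, abs_of_pos hr, abs_of_pos hr'] using this
      subst e1
      have e2 : ω' = ω := by
        apply Subtype.ext
        exact smul_right_injective E hr.ne' h3
      subst e2
      exact ⟨h1, h2⟩
    · rintro ⟨h1, h2⟩
      exact ⟨(r, ω), ⟨h1, h2⟩, rfl⟩
  have hKm : MeasurableSet K := by
    have : K = (↑) '' ((homeomorphUnitSphereProd E) ⁻¹' (A ×ˢ ((↑) ⁻¹' I))) := by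
      rw [← Homeomorph.image_symm, image_image, hK]
      ext x
      constructor
      · rintro ⟨⟨r, ω⟩, ⟨h1, h2⟩, h3⟩
        exact ⟨(ω, ⟨r, hI0 h1⟩), ⟨h2, h1⟩, h3⟩
      · rintro ⟨⟨ω, r⟩, ⟨h1, h2⟩, h3⟩
        exact ⟨(r, ω), ⟨h2, h1⟩, h3⟩
    rw [this]
    apply (MeasurableEmbedding.subtype_coe (measurableSet_singleton _).compl).measurableSet_image.2
    exact (homeomorphUnitSphereProd E).measurable (hA.prod (measurable_subtype_coe hI))
  refine ⟨hKm, ?_⟩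
  have h := oc_polar hfr hn (K.indicator 1) (measurable_one.indicator hKm)
  rw [lintegral_indicator_one hKm] at h
  rw [h]
  have : ∀ r ∈ Ioi (0:ℝ), ENNReal.ofReal (r ^ (n-1)) *
      ∫⁻ ω : sphere (0 : E) 1, K.indicator (1 : E → ℝ≥0∞) (r • (ω : E)) ∂(volume : Measure E).toSphere
      = I.indicator (fun r => ENNReal.ofReal (r ^ (n-1)) * (volume : Measure E).toSphere A) r := by
    intro r hr
    by_cases hrI : r ∈ I
    · rw [indicator_of_mem hrI, ← lintegral_indicator_one hA]
      congr 1
      apply lintegral_congr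
      intro ω
      by_cases hω : ω ∈ A
      · rw [indicator_of_mem ((hmem r hr ω).2 ⟨hrI, hω⟩), indicator_of_mem hω]; rfl
      · rw [indicator_of_notMem (fun h => hω ((hmem r hr ω).1 h).2), indicator_of_notMem hω]
    · rw [indicator_of_notMem hrI]
      have : ∀ ω : sphere (0:E) 1, K.indicator (1 : E → ℝ≥0∞) (r • (ω : E)) = 0 := fun ω =>
        indicator_of_notMem (fun h => hrI ((hmem r hr ω).1 h).1) _
      simp [this]
  rw [setLIntegral_congr_fun measurableSet_Ioi this, setLIntegral_indicator hI,
    inter_eq_left.2 hI0, lintegral_mul_const]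
  fun_prop


lemma oc_box {m : ℕ} (hfr : Module.finrank ℝ E = m + 1)
    (U : Set (sphere (0:E) 1)) (hne : U.Nonempty) (d h : ℝ) (hd : 0 ≤ d) (h0 : 0 < h) (h1 : h < 1)
    (hU : ∀ x ∈ U, ∀ y ∈ U, dist x y ≤ d) :
    volume ((fun p : ℝ × sphere (0 : E) 1 => p.1 • p.2.1) '' (Ioo (1-h) 1 ×ˢ U)) ≤
      ENNReal.ofReal ((h + d^2/2) * (d * (1+h))^m) := by
  obtain ⟨e, he⟩ := hne
  have hen : ‖e.1‖ = 1 := by simp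
  obtain ⟨b, hb⟩ := Orthonormal.exists_orthonormalBasis_extension_of_card_eq (𝕜 := ℝ) (E := E)
    (ι := Fin (m+1)) (by simpa using hfr) (v := fun _ => e.1) (s := {0}) (by
      rw [orthonormal_iff_ite]
      rintro ⟨i, hi⟩ ⟨j, hj⟩
      obtain rfl : i = 0 := hi
      obtain rfl : j = 0 := hj
      simp [hen])
  have hb0 : b 0 = e.1 := hb 0 rfl
  set K := ((fun p : ℝ × sphere (0 : E) 1 => p.1 • p.2.1) '' (Ioo (1-h) 1 ×ˢ U)) with hK
  let f : E ≃ᵐ (Fin (m+1) → ℝ) := b.measurableEquiv.trans (MeasurableEquiv.toLp 2 _).symm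
  have hf : MeasurePreserving f volume volume :=
    (EuclideanSpace.volume_preserving_symm_measurableEquiv_toLp (Fin (m+1))).comp
      b.measurePreserving_measurableEquiv
  have hfi : ∀ x i, f x i = inner ℝ (b i) x := fun x i => b.repr_apply_apply x i
  have hvol : volume K = volume (f '' K) := by
    rw [← hf.measure_preimage_equiv (f '' K), preimage_image_eq _ f.injective]
  have hdist : ∀ x ∈ U, ∀ y ∈ U, ‖x.1 - y.1‖ ≤ d := fun x hx y hy => by
    have := hU x hx y hy
    rwa [Subtype.dist_eq, dist_eq_norm] at this
  have hin : ∀ i, i ≠ 0 → ∀ x ∈ U, |inner ℝ (b i) x.1| ≤ d := by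
    intro i hi x hx
    have h3 : inner ℝ (b i) e.1 = 0 := by
      rw [← hb0]; exact b.orthonormal.2 hi
    have : inner ℝ (b i) x.1 = inner ℝ (b i) (x.1 - e.1) := by
      rw [inner_sub_right, h3, sub_zero]
    rw [this]
    calc _ ≤ ‖b i‖ * ‖x.1 - e.1‖ := abs_real_inner_le_norm _ _
      _ ≤ d := by rw [b.orthonormal.1 i, one_mul]; exact hdist x hx e he
  have hin2 : ∀ i, ∀ x ∈ U, ∀ y ∈ U, |inner ℝ (b i) x.1 - inner ℝ (b i) y.1| ≤ d := by
    intro i x hx y hy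
    rw [← inner_sub_right]
    calc _ ≤ ‖b i‖ * ‖x.1 - y.1‖ := abs_real_inner_le_norm _ _
      _ ≤ d := by rw [b.orthonormal.1 i, one_mul]; exact hdist x hx y hy
  have hin0 : ∀ x ∈ U, 1 - d^2/2 ≤ inner ℝ (b 0) x.1 ∧ inner ℝ (b 0) x.1 ≤ 1 := by
    intro x hx
    have hxn : ‖x.1‖ = 1 := by simp
    rw [hb0]
    have h4 := norm_sub_sq_real e.1 x.1
    have h5 := hdist e he x hx
    rw [hen, hxn] at h4
    have h6 : ‖e.1 - x.1‖^2 ≤ d^2 := by gcongr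
    have h7 := real_inner_le_norm e.1 x.1
    rw [hen, hxn] at h7
    constructor <;> nlinarith
  rw [hvol]
  refine (Real.volume_pi_le_prod_diam _).trans ?_
  rw [Fin.prod_univ_succ, ENNReal.ofReal_mul (by positivity), ENNReal.ofReal_pow (by positivity)]
  gcongr ?_ * ?_
  · apply ediam_le
    rintro _ ⟨_, ⟨_, ⟨⟨r, x⟩, ⟨hr, hx⟩, rfl⟩, rfl⟩, rfl⟩ _ ⟨_, ⟨_, ⟨⟨s, y⟩, ⟨hs, hy⟩, rfl⟩, rfl⟩, rfl⟩
    simp only [mem_Ioo] at hr hs hx hy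
    simp only [Function.eval, hfi, inner_smul_right]
    rw [edist_dist, Real.dist_eq]
    apply ENNReal.ofReal_le_ofReal
    have a1 := hin0 x hx
    have a2 := hin0 y hy
    have key : ∀ r u : ℝ, 1 - h < r → r < 1 → 1 - d^2/2 ≤ u → u ≤ 1 → 
        1 - h - d^2/2 ≤ r * u ∧ r * u ≤ 1 := by
      intro r u p1 p2 p3 p4
      have : 0 < r := by linarith
      constructor <;> nlinarith [sq_nonneg d]
    have k1 := key r _ hr.1 hr.2 a1.1 a1.2
    have k2 := key s _ hs.1 hs.2 a2.1 a2.2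
    rw [abs_le]; constructor <;> linarith
  · refine (Finset.prod_le_pow_card _ _ (ENNReal.ofReal (d * (1+h))) ?_).trans_eq (by simp)
    rintro i -
    apply ediam_le
    rintro _ ⟨_, ⟨_, ⟨⟨r, x⟩, ⟨hr, hx⟩, rfl⟩, rfl⟩, rfl⟩ _ ⟨_, ⟨_, ⟨⟨s, y⟩, ⟨hs, hy⟩, rfl⟩, rfl⟩, rfl⟩
    simp only [mem_Ioo] at hr hs hx hy
    simp only [Function.eval, hfi, inner_smul_right]
    rw [edist_dist, Real.dist_eq]
    apply ENNReal.ofReal_le_ofReal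
    have a1 := hin2 i.succ x hx y hy
    have a2 := hin _ (Fin.succ_ne_zero i) y hy
    have e1 : r * inner ℝ (b i.succ) x.1 - s * inner ℝ (b i.succ) y.1 =
      r * (inner ℝ (b i.succ) x.1 - inner ℝ (b i.succ) y.1) + (r - s) * inner ℝ (b i.succ) y.1 := by
      ring
    rw [e1]
    calc _ ≤ |r| * |inner ℝ (b i.succ) x.1 - inner ℝ (b i.succ) y.1|
          + |r - s| * |inner ℝ (b i.succ) y.1| := by
          rw [← abs_mul, ← abs_mul]; exact abs_add_le _ _
      _ ≤ 1 * d + h * d := by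
          gcongr
          · rw [abs_le]; constructor <;> linarith
          · rw [abs_le]; constructor <;> linarith
      _ = _ := by ring

lemma oc_toSphere_le_aux {m : ℕ} (hm : 1 ≤ m) (hfr : Module.finrank ℝ E = m + 1) (h : ℝ)
    (h0 : 0 < h) (h1 : h < 1) :
    (volume : Measure E).toSphere ≤
      ENNReal.ofReal ((1+h)^(m+1) / (1-h)^m) • (μH[(m:ℝ)] : Measure (sphere (0:E) 1)) := by
  set c := ENNReal.ofReal ((1+h)^(m+1) / (1-h)^m) with hc
  have h1h : 0 < 1 - h := by linarith
  have hcpos : 0 < (1+h)^(m+1) / (1-h)^m := by positivity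
  have hc0 : c ≠ 0 := by simpa [hc] using hcpos
  have hct : c ≠ ⊤ := ENNReal.ofReal_ne_top
  suffices hs : c⁻¹ • (volume : Measure E).toSphere ≤ μH[(m:ℝ)] by
    intro A
    have := hs A
    simp only [Measure.smul_apply, smul_eq_mul] at this ⊢
    rwa [ENNReal.inv_mul_le_iff hc0 hct] at this
  apply Measure.le_hausdorffMeasure _ _ (ENNReal.ofReal h) (by simpa using h0)
  intro s hs
  rcases s.eq_empty_or_nonempty with rfl | hne
  · simp
  set U := closure s with hU
  have hUd : ediam U = ediam s := ediam_closure s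
  set d := (ediam s).toReal with hd
  have hdt : ediam s ≠ ⊤ := (hs.trans_lt ENNReal.ofReal_lt_top).ne
  have hd0 : 0 ≤ d := ENNReal.toReal_nonneg
  have hde : ediam s = ENNReal.ofReal d := (ENNReal.ofReal_toReal hdt).symm
  have hdh : d ≤ h := by
    rw [hde] at hs
    exact (ENNReal.ofReal_le_ofReal_iff h0.le).1 hs
  have hbox := oc_box hfr U hne.closure d h hd0 h0 h1 (by
    intro x hx y hy
    have := edist_le_ediam_of_mem hx hy
    rw [hUd, hde, edist_dist] at this
    exact (ENNReal.ofReal_le_ofReal_iff hd0).1 this)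
  have hsh := (oc_shell hfr (by omega) U isClosed_closure.measurableSet (Ioo (1-h) 1)
    measurableSet_Ioo (fun x hx => by have := hx.1; simp only [mem_Ioi]; linarith) _ rfl).2
  rw [hsh] at hbox
  simp only [Nat.add_sub_cancel] at hbox
  have hlow : ENNReal.ofReal (h * (1-h)^m) ≤ ∫⁻ r in Ioo (1-h) 1, ENNReal.ofReal (r ^ m) := by
    calc ENNReal.ofReal (h * (1-h)^m) = ∫⁻ r in Ioo (1-h) 1, ENNReal.ofReal ((1-h) ^ m) := by
          rw [setLIntegral_const, Real.volume_Ioo, mul_comm, ENNReal.ofReal_mul (by positivity)]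
          congr 2; ring
      _ ≤ _ := by
          apply setLIntegral_mono' measurableSet_Ioo
          intro r hr
          apply ENNReal.ofReal_le_ofReal
          have := hr.1
          gcongr
  have hmain : ENNReal.ofReal (h * (1-h)^m) * (volume : Measure E).toSphere U ≤
      ENNReal.ofReal ((h + d^2/2) * (d * (1+h))^m) := le_trans (by gcongr) hbox
  rw [Measure.smul_apply, smul_eq_mul, ENNReal.inv_mul_le_iff hc0 hct]
  refine (measure_mono (subset_closure : s ⊆ U)).trans ?_
  have hp : 0 < h * (1-h)^m := by positivity
  have hp0 : ENNReal.ofReal (h * (1-h)^m) ≠ 0 := by simpa using hp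
  rw [mul_comm, ← ENNReal.le_div_iff_mul_le (Or.inl hp0) (Or.inl ENNReal.ofReal_ne_top)] at hmain
  refine hmain.trans ?_
  rw [← ENNReal.ofReal_div_of_pos hp, hde, ENNReal.rpow_natCast, ← ENNReal.ofReal_pow hd0, hc,
    ← ENNReal.ofReal_mul hcpos.le]
  apply ENNReal.ofReal_le_ofReal
  rw [div_mul_eq_mul_div, div_le_div_iff₀ hp (by positivity)]
  have : h + d^2/2 ≤ h * (1+h) := by nlinarith
  calc (h + d ^ 2 / 2) * (d * (1 + h)) ^ m * (1 - h) ^ m 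
      ≤ (h * (1+h)) * (d * (1 + h)) ^ m * (1 - h) ^ m := by gcongr
    _ = _ := by rw [mul_pow]; ring

lemma oc_toSphere_le {m : ℕ} (hm : 1 ≤ m) (hfr : Module.finrank ℝ E = m + 1) :
    (volume : Measure E).toSphere ≤ (μH[(m:ℝ)] : Measure (sphere (0:E) 1)) := by
  intro A
  have ht : Filter.Tendsto (fun h : ℝ => ENNReal.ofReal ((1+h)^(m+1) / (1-h)^m) *
      (μH[(m:ℝ)] : Measure (sphere (0:E) 1)) A) (nhdsWithin 0 (Ioi 0))
      (nhds (1 * (μH[(m:ℝ)] : Measure (sphere (0:E) 1)) A)) := by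
    apply ENNReal.Tendsto.mul_const _ (Or.inl one_ne_zero)
    have : Filter.Tendsto (fun h : ℝ => ((1+h)^(m+1) / (1-h)^m)) (nhdsWithin 0 (Ioi 0))
      (nhds ((1+0)^(m+1) / (1-0)^m)) := by
      apply Filter.Tendsto.mono_left _ nhdsWithin_le_nhds
      have : ContinuousAt (fun h : ℝ => ((1+h)^(m+1) / (1-h)^m)) 0 := by
        apply ContinuousAt.div
        · fun_prop
        · fun_prop
        · simp
      exact this
    have h2 := ENNReal.tendsto_ofReal this
    simpa using h2
  rw [one_mul] at ht
  apply ge_of_tendsto ht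
  filter_upwards [Ioo_mem_nhdsGT (zero_lt_one)] with h hh
  exact oc_toSphere_le_aux hm hfr h hh.1 hh.2 A

lemma oc_le_toSphere {m : ℕ} (hm : 1 ≤ m) (hfr : Module.finrank ℝ E = m + 1) :
    ∃ C : ℝ≥0∞, C ≠ ⊤ ∧ (μH[(m:ℝ)] : Measure (sphere (0:E) 1)) ≤
      C • (volume : Measure E).toSphere := by
  have hH : (μH[(Module.finrank ℝ E : ℝ)] : Measure E).IsAddHaarMeasure := inferInstance
  have hHv := Measure.isAddLeftInvariant_eq_smul (μH[(Module.finrank ℝ E : ℝ)] : Measure E) volume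
  set c := Measure.addHaarScalarFactor (μH[(Module.finrank ℝ E : ℝ)] : Measure E) volume with hc
  set ν := ∫⁻ r in Ioo (1:ℝ) 2, ENNReal.ofReal (r ^ m) with hν
  have hνt : ν ≠ ⊤ := by
    apply ne_of_lt
    calc ν ≤ ∫⁻ r in Ioo (1:ℝ) 2, ENNReal.ofReal (2 ^ m) := by
          apply setLIntegral_mono' measurableSet_Ioo
          intro r hr
          apply ENNReal.ofReal_le_ofReal
          have h1 := hr.1
          have h2 := hr.2
          gcongr
      _ < ⊤ := by
          rw [setLIntegral_const, Real.volume_Ioo]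
          exact ENNReal.mul_lt_top ENNReal.ofReal_lt_top ENNReal.ofReal_lt_top
  refine ⟨c * ν, ENNReal.mul_ne_top ENNReal.coe_ne_top hνt, ?_⟩
  rw [Measure.le_iff]
  intro A hA
  obtain ⟨hKm, hKv⟩ := oc_shell hfr (by omega) A hA (Ioo (1:ℝ) 2) measurableSet_Ioo
    (fun x hx => by have := hx.1; simp only [mem_Ioi]; linarith) _ rfl
  set K := (fun p : ℝ × sphere (0 : E) 1 => p.1 • p.2.1) '' (Ioo (1:ℝ) 2 ×ˢ A) with hK
  set M := c * ν * (volume : Measure E).toSphere A with hM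
  have hMt : M ≠ ⊤ := ENNReal.mul_ne_top (ENNReal.mul_ne_top ENNReal.coe_ne_top hνt)
    (measure_ne_top _ _)
  have hKM : μH[((m:ℝ)+1)] K = M := by
    have e : (m:ℝ) + 1 = (Module.finrank ℝ E : ℝ) := by rw [hfr]; push_cast; ring
    rw [e, hHv, Measure.smul_apply, hKv, hM, mul_assoc]
    simp only [Nat.add_sub_cancel]
    rfl
  let q : ℕ → ℝ≥0∞ := fun k => ((k:ℝ≥0∞) + 1)⁻¹
  have hq0 : ∀ k, 0 < q k := fun k => by
    simp only [q, ENNReal.inv_pos]; finiteness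
  have hqt : Filter.Tendsto q Filter.atTop (nhds 0) := by
    have := (Filter.tendsto_add_atTop_iff_nat 1).2 ENNReal.tendsto_inv_nat_nhds_zero
    simpa [q] using this
  have hm1 : (0:ℝ) < (m:ℝ) + 1 := by positivity
  have hcov : ∀ k, ∃ t : ℕ → Set E, K ⊆ ⋃ i, t i ∧ (∀ i, ediam (t i) ≤ q k) ∧
      ∑' i, ediam (t i) ^ ((m:ℝ)+1) ≤ M + q k := by
    intro k
    have h1 := hKM.le
    rw [Measure.hausdorffMeasure_apply] at h1
    have h2 := (le_iSup₂ (f := fun (r : ℝ≥0∞) (_ : 0 < r) => 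
        ⨅ (t : ℕ → Set E) (_ : K ⊆ ⋃ n, t n) (_ : ∀ n, ediam (t n) ≤ r),
          ∑' n, ⨆ _ : (t n).Nonempty, ediam (t n) ^ ((m:ℝ)+1)) (q k) (hq0 k)).trans h1
    have h3 := h2.trans_lt (ENNReal.lt_add_right hMt (hq0 k).ne')
    simp only [iInf_lt_iff] at h3
    obtain ⟨t, h4, h5, h6⟩ := h3
    refine ⟨t, h4, h5, le_trans (ENNReal.tsum_le_tsum fun i => ?_) h6.le⟩
    rcases (t i).eq_empty_or_nonempty with h | h
    · rw [h]; simp [hm1]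
    · exact le_iSup_of_le h le_rfl
  choose t ht1 ht2 ht3 using hcov
  let R : ℕ → ℕ → Set ℝ := fun k i => closure (norm '' t k i)
  have hRv : ∀ k i, volume (R k i) ≤ ediam (t k i) := by
    intro k i
    refine (Real.volume_le_diam _).trans ?_
    rw [ediam_closure]
    exact (lipschitzWith_one_norm.ediam_image_le _).trans_eq (by simp)
  have hslice : ∀ r ∈ Ioo (1:ℝ) 2, (μH[(m:ℝ)] : Measure (sphere (0:E) 1)) A ≤ 
      Filter.liminf (fun k => ∑' i, (R k i).indicator (fun _ => ediam (t k i) ^ (m:ℝ)) r)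
        Filter.atTop := by
    intro r hr
    have hr0 : 0 < r := by linarith [hr.1]
    let s : ℕ → ℕ → Set (sphere (0:E) 1) := fun k i => {ω | r • ω.1 ∈ t k i}
    have hsd : ∀ k i, ediam (s k i) ≤ ediam (t k i) := by
      intro k i
      apply ediam_le
      intro x hx y hy
      refine le_trans ?_ (edist_le_ediam_of_mem (show r • x.1 ∈ t k i from hx)
        (show r • y.1 ∈ t k i from hy))
      rw [Subtype.edist_eq, edist_dist, edist_dist]
      apply ENNReal.ofReal_le_ofReal
      rw [dist_smul₀, Real.norm_eq_abs, abs_of_pos hr0]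
      have := hr.1
      have h2 : 0 ≤ dist x.1 y.1 := dist_nonneg
      nlinarith
    have h1 := Measure.hausdorffMeasure_le_liminf_tsum (m:ℝ) A q hqt s
      (Filter.Eventually.of_forall fun k i => (hsd k i).trans (ht2 k i))
      (Filter.Eventually.of_forall fun k ω hω => by
        have := ht1 k (show r • ω.1 ∈ K from ⟨(r, ω), ⟨hr, hω⟩, rfl⟩)
        rw [mem_iUnion] at this ⊢
        exact this)
    refine h1.trans (Filter.liminf_le_liminf (Filter.Eventually.of_forall fun k => ?_))
    apply ENNReal.tsum_le_tsum
    intro i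
    rcases (s k i).eq_empty_or_nonempty with h | ⟨ω, hω⟩
    · rw [h]
      rw [ediam_empty, ENNReal.zero_rpow_of_pos (by exact_mod_cast hm)]
      exact zero_le
    · have : r ∈ R k i := subset_closure ⟨r • ω.1, hω, by simp [norm_smul, abs_of_pos hr0]⟩
      rw [indicator_of_mem this]
      exact ENNReal.rpow_le_rpow (hsd k i) (by positivity)
  rw [Measure.smul_apply, smul_eq_mul]
  calc (μH[(m:ℝ)] : Measure (sphere (0:E) 1)) A
      = ∫⁻ r in Ioo (1:ℝ) 2, (μH[(m:ℝ)] : Measure (sphere (0:E) 1)) A := by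
        rw [setLIntegral_const, Real.volume_Ioo]; norm_num
    _ ≤ ∫⁻ r in Ioo (1:ℝ) 2, Filter.liminf (fun k => ∑' i,
          (R k i).indicator (fun _ => ediam (t k i) ^ (m:ℝ)) r) Filter.atTop :=
        setLIntegral_mono' measurableSet_Ioo hslice
    _ ≤ Filter.liminf (fun k => ∫⁻ r in Ioo (1:ℝ) 2, ∑' i,
          (R k i).indicator (fun _ => ediam (t k i) ^ (m:ℝ)) r) Filter.atTop := by
        apply lintegral_liminf_le
        intro k
        apply Measurable.tsum
        intro i
        exact measurable_const.indicator isClosed_closure.measurableSet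
    _ ≤ Filter.liminf (fun k => M + q k) Filter.atTop := by
        refine Filter.liminf_le_liminf (Filter.Eventually.of_forall fun k => ?_)
        refine le_trans ?_ (ht3 k)
        rw [lintegral_tsum]
        · apply ENNReal.tsum_le_tsum
          intro i
          rw [lintegral_indicator_const isClosed_closure.measurableSet,
            ENNReal.rpow_add_of_nonneg _ _ (by positivity) zero_le_one, ENNReal.rpow_one]
          gcongr
          exact (Measure.restrict_apply_le _ _).trans (hRv k i)
        · intro i
          exact (measurable_const.indicator isClosed_closure.measurableSet).aemeasurable
    _ = M := by
        apply Filter.Tendsto.liminf_eq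
        have : Filter.Tendsto (fun k => M + q k) Filter.atTop (nhds (M + 0)) :=
          hqt.const_add M
        simpa using this

end polar

section oneD

/-- extension of the one-dimensional inequality to bounded measurable profiles -/
lemma oc_extend {ρ σ J : ℝ} (hρσ : ρ < σ) (H : ℝ → ℝ) (hH0 : ∀ r, 0 ≤ H r)
    (hHi : IntegrableOn H (Ioc ρ σ))
    (hJ : ∀ φ : ℝ → ℝ, Continuous φ → (∀ r, 0 ≤ φ r) →
      (∃ a b, ρ < a ∧ b < σ ∧ ∀ r, r ∉ Icc a b → φ r = 0) →
      J * (∫ r in Ioc ρ σ, φ r) ^ 2 ≤ ∫ r in Ioc ρ σ, φ r ^ 2 * H r)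
    (φ : ℝ → ℝ) (hφm : Measurable φ) (hφ0 : ∀ r, 0 ≤ φ r) (M : ℝ) (hφM : ∀ r, φ r ≤ M) :
    J * (∫ r in Ioc ρ σ, φ r) ^ 2 ≤ ∫ r in Ioc ρ σ, φ r ^ 2 * H r := by
  have hM0 : 0 ≤ M := (hφ0 0).trans (hφM 0)
  have hloc : LocallyIntegrable φ volume := by
    apply (locallyIntegrable_const M).mono hφm.aestronglyMeasurable
    filter_upwards with r
    rw [Real.norm_of_nonneg (hφ0 r), Real.norm_of_nonneg hM0]
    exact hφM r
  have hii : ∀ a b, IntervalIntegrable φ volume a b := fun a b =>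
    (hloc.integrableOn_isCompact isCompact_uIcc).intervalIntegrable
  let t : ℕ → ℝ := fun k => 1 / ((k:ℝ) + 1)
  have ht0 : ∀ k, 0 < t k := fun k => by positivity
  have htt : Filter.Tendsto t Filter.atTop (nhds 0) := tendsto_one_div_add_atTop_nhds_zero_nat
  have htt' : Filter.Tendsto t Filter.atTop (nhdsWithin 0 (Ioi 0)) :=
    tendsto_nhdsWithin_iff.2 ⟨htt, Filter.Eventually.of_forall ht0⟩
  let F : ℝ → ℝ := fun x => ∫ s in (0:ℝ)..x, φ s
  have hFc : Continuous F := intervalIntegral.continuous_primitive hii 0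
  let χ : ℕ → ℝ → ℝ := fun k x => max 0 (min 1 ((t k)⁻¹ * (min (x - ρ) (σ - x) - t k)))
  have hχ0 : ∀ k x, 0 ≤ χ k x := fun k x => le_max_left _ _
  have hχ1 : ∀ k x, χ k x ≤ 1 := fun k x => max_le zero_le_one (min_le_left _ _)
  let g : ℕ → ℝ → ℝ := fun k x => χ k x * ((t k)⁻¹ * (F (x + t k) - F x))
  have hFd : ∀ k x, F (x + t k) - F x = ∫ s in x..(x + t k), φ s := fun k x =>
    intervalIntegral.integral_interval_sub_left (hii _ _) (hii _ _)
  have hA0 : ∀ k x, 0 ≤ (t k)⁻¹ * (F (x + t k) - F x) := by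
    intro k x
    rw [hFd]
    have := ht0 k
    have : 0 ≤ ∫ s in x..(x + t k), φ s :=
      intervalIntegral.integral_nonneg (by linarith) (fun u _ => hφ0 u)
    positivity
  have hAM : ∀ k x, (t k)⁻¹ * (F (x + t k) - F x) ≤ M := by
    intro k x
    rw [hFd, inv_mul_le_iff₀ (ht0 k)]
    have h1 : ∫ s in x..(x + t k), φ s ≤ ∫ s in x..(x + t k), M :=
      intervalIntegral.integral_mono_on (by linarith [ht0 k]) (hii _ _) (by simp)
        (fun u _ => hφM u)
    simpa using h1
  have hg0 : ∀ k x, 0 ≤ g k x := fun k x => mul_nonneg (hχ0 k x) (hA0 k x)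
  have hgM : ∀ k x, g k x ≤ M := fun k x => by
    calc g k x ≤ 1 * ((t k)⁻¹ * (F (x + t k) - F x)) := 
          mul_le_mul_of_nonneg_right (hχ1 k x) (hA0 k x)
      _ ≤ M := by rw [one_mul]; exact hAM k x
  have hgc : ∀ k, Continuous (g k) := by
    intro k
    have : Continuous (χ k) := by fun_prop
    fun_prop
  have hgs : ∀ k, ∃ a b, ρ < a ∧ b < σ ∧ ∀ r, r ∉ Icc a b → g k r = 0 := by
    intro k
    refine ⟨ρ + t k, σ - t k, by linarith [ht0 k], by linarith [ht0 k], fun r hr => ?_⟩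
    have : χ k r = 0 := by
      apply max_eq_left
      apply (min_le_right _ _).trans
      apply mul_nonpos_of_nonneg_of_nonpos (inv_nonneg.2 (ht0 k).le)
      rw [mem_Icc, not_and_or] at hr
      rcases hr with hr | hr
      · linarith [min_le_left (r - ρ) (σ - r)]
      · linarith [min_le_right (r - ρ) (σ - r)]
    simp [g, this]
  have hχt : ∀ x ∈ Ioo ρ σ, Filter.Tendsto (fun k => χ k x) Filter.atTop (nhds 1) := by
    intro x hx
    apply tendsto_const_nhds.congr'
    have hpos : 0 < min (x - ρ) (σ - x) / 2 := by
      have := hx.1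
      have := hx.2
      have : 0 < min (x - ρ) (σ - x) := lt_min (by linarith) (by linarith)
      linarith
    filter_upwards [htt.eventually (gt_mem_nhds hpos)] with k hk
    have : 1 ≤ (t k)⁻¹ * (min (x - ρ) (σ - x) - t k) := by
      rw [le_inv_mul_iff₀ (ht0 k)]; linarith
    simp only [χ]
    rw [min_eq_left this]; simp
  have hgt : ∀ᵐ x ∂(volume.restrict (Ioc ρ σ)), 
      Filter.Tendsto (fun k => g k x) Filter.atTop (nhds (φ x)) := by
    have h1 := ae_restrict_of_ae (s := Ioc ρ σ) (LocallyIntegrable.ae_hasDerivAt_integral hloc)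
    have h2 : ∀ᵐ x ∂(volume.restrict (Ioc ρ σ)), x ∈ Ioo ρ σ := by
      rw [Measure.restrict_congr_set Ioo_ae_eq_Ioc.symm]
      exact ae_restrict_mem measurableSet_Ioo
    filter_upwards [h1, h2] with x h1 h2
    have h3 := (h1 0).tendsto_slope_zero_right.comp htt'
    have h4 := (hχt x h2).mul h3
    rw [one_mul] at h4
    exact h4
  have hgh : ∀ k, J * (∫ r in Ioc ρ σ, g k r) ^ 2 ≤ ∫ r in Ioc ρ σ, g k r ^ 2 * H r := fun k =>
    hJ (g k) (hgc k) (hg0 k) (hgs k)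
  have l1 : Filter.Tendsto (fun k => ∫ r in Ioc ρ σ, g k r) Filter.atTop
      (nhds (∫ r in Ioc ρ σ, φ r)) := by
    apply tendsto_integral_of_dominated_convergence (fun _ => M)
    · intro k; exact (hgc k).aestronglyMeasurable
    · exact integrable_const M
    · intro k
      filter_upwards with x
      rw [Real.norm_of_nonneg (hg0 k x)]; exact hgM k x
    · exact hgt
  have l2 : Filter.Tendsto (fun k => ∫ r in Ioc ρ σ, g k r ^ 2 * H r) Filter.atTop
      (nhds (∫ r in Ioc ρ σ, φ r ^ 2 * H r)) := by
    apply tendsto_integral_of_dominated_convergence (fun r => M ^ 2 * H r)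
    · intro k; exact ((hgc k).pow 2).aestronglyMeasurable.mul hHi.aestronglyMeasurable
    · exact hHi.const_mul _
    · intro k
      filter_upwards with x
      rw [Real.norm_of_nonneg (mul_nonneg (sq_nonneg _) (hH0 x))]
      have := hg0 k x
      have := hgM k x
      have := hH0 x
      gcongr
    · filter_upwards [hgt] with x hx
      exact (hx.pow 2).mul_const _
  exact le_of_tendsto_of_tendsto' ((l1.pow 2).const_mul J) l2 hgh

lemma oc_holder {ρ σ : ℝ} (hρσ : ρ < σ) (K : ℝ → ℝ) (ε : ℝ) (hε : 0 < ε) (hK0 : ∀ r, ε ≤ K r)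
    (hKm : Measurable K) (hKi : IntegrableOn K (Ioc ρ σ)) (δ : ℝ) (hδ0 : 0 < δ) (hδ1 : δ ≤ 1) :
    (σ - ρ) ^ (1 + 1/δ) ≤ (∫ r in Ioc ρ σ, K r ^ δ) ^ (1/δ) * ∫ r in Ioc ρ σ, (K r)⁻¹ := by
  have hKp : ∀ r, 0 < K r := fun r => hε.trans_le (hK0 r)
  set p := 1 + δ with hp
  set q := (1 + δ) / δ with hq
  have hpq : p.HolderConjugate q := by
    rw [Real.holderConjugate_iff]
    refine ⟨by linarith, ?_⟩
    rw [hp, hq]; field_simp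
  have hi1 : IntegrableOn (fun r => K r ^ δ) (Ioc ρ σ) := by
    apply Integrable.mono' ((integrable_const (1:ℝ)).add hKi)
    · exact (hKm.pow_const δ).aestronglyMeasurable
    · filter_upwards with r
      rw [Real.norm_of_nonneg (Real.rpow_nonneg (hKp r).le _)]
      simp only [Pi.add_apply]
      rcases le_total 1 (K r) with h | h
      · have := Real.rpow_le_rpow_of_exponent_le h hδ1
        rw [Real.rpow_one] at this
        linarith
      · have := Real.rpow_le_one (hKp r).le h hδ0.le
        linarith [hKp r]
  have hi2 : IntegrableOn (fun r => (K r)⁻¹) (Ioc ρ σ) := by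
    apply Integrable.mono' (integrable_const (ε⁻¹:ℝ))
    · exact hKm.inv.aestronglyMeasurable
    · filter_upwards with r
      rw [Real.norm_of_nonneg (inv_nonneg.2 (hKp r).le)]
      exact inv_anti₀ hε (hK0 r)
  have e1 : ∀ r, (K r ^ (δ / (1+δ))) ^ p = K r ^ δ := fun r => by
    rw [← Real.rpow_mul (hKp r).le]; congr 1; rw [hp]; field_simp
  have e2 : ∀ r, (K r ^ (-(δ / (1+δ)))) ^ q = (K r)⁻¹ := fun r => by
    rw [← Real.rpow_mul (hKp r).le, ← Real.rpow_neg_one]; congr 1; rw [hq]; field_simp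
  have memaux : ∀ (s p : ℝ), 0 < p → IntegrableOn (fun r => (K r ^ s) ^ p) (Ioc ρ σ) → 
      MemLp (fun r => K r ^ s) (ENNReal.ofReal p) (volume.restrict (Ioc ρ σ)) := by
    intro s p hp hi
    rw [← integrable_norm_rpow_iff (hKm.pow_const s).aestronglyMeasurable
      (by simpa using hp) ENNReal.ofReal_ne_top, ENNReal.toReal_ofReal hp.le]
    refine hi.congr ?_
    filter_upwards with r
    rw [Real.norm_of_nonneg (Real.rpow_nonneg (hKp r).le _)]
  have hh := integral_mul_le_Lp_mul_Lq_of_nonneg (μ := volume.restrict (Ioc ρ σ)) hpq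
    (f := fun r => K r ^ (δ / (1+δ))) (g := fun r => K r ^ (-(δ / (1+δ))))
    (by filter_upwards with r; exact Real.rpow_nonneg (hKp r).le _)
    (by filter_upwards with r; exact Real.rpow_nonneg (hKp r).le _)
    (memaux _ _ (by linarith) (by simpa only [e1] using hi1))
    (memaux _ _ (by positivity) (by simpa only [e2] using hi2))
  simp only [e1, e2] at hh
  have e3 : ∀ r, K r ^ (δ / (1+δ)) * K r ^ (-(δ / (1+δ))) = 1 := fun r => by
    rw [← Real.rpow_add (hKp r)]; simp
  simp only [e3] at hh
  have e4 : ∫ r in Ioc ρ σ, (1:ℝ) = σ - ρ := by simp [hρσ.le]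
  rw [e4] at hh
  set P := ∫ r in Ioc ρ σ, K r ^ δ
  set L := ∫ r in Ioc ρ σ, (K r)⁻¹
  have hP : 0 ≤ P := integral_nonneg fun r => Real.rpow_nonneg (hKp r).le _
  have hL : 0 ≤ L := integral_nonneg fun r => inv_nonneg.2 (hKp r).le
  have h5 := Real.rpow_le_rpow (by linarith) hh (show 0 ≤ q by positivity)
  rw [Real.mul_rpow (by positivity) (by positivity), ← Real.rpow_mul hP, ← Real.rpow_mul hL] at h5
  have e5 : 1 / q * q = 1 := by rw [hq]; field_simp
  have e6 : 1 / p * q = 1 / δ := by rw [hq, hp]; field_simp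
  have e7 : q = 1 + 1/δ := by rw [hq]; field_simp; ring
  rwa [e5, e6, Real.rpow_one, e7] at h5

lemma oc_oneD {ρ σ J : ℝ} (hρσ : ρ < σ) (hJ0 : 0 ≤ J) (H : ℝ → ℝ) (hH0 : ∀ r, 0 ≤ H r)
    (hHm : Measurable H) (hHi : IntegrableOn H (Ioc ρ σ))
    (hJ : ∀ φ : ℝ → ℝ, Continuous φ → (∀ r, 0 ≤ φ r) →
      (∃ a b, ρ < a ∧ b < σ ∧ ∀ r, r ∉ Icc a b → φ r = 0) →
      J * (∫ r in Ioc ρ σ, φ r) ^ 2 ≤ ∫ r in Ioc ρ σ, φ r ^ 2 * H r)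
    (δ : ℝ) (hδ0 : 0 < δ) (hδ1 : δ ≤ 1) :
    J ≤ (σ - ρ) ^ (-(1 + 1/δ)) * (∫ r in Ioc ρ σ, H r ^ δ) ^ (1/δ) := by
  have hℓ : 0 < σ - ρ := by linarith
  have hiH : IntegrableOn (fun r => H r ^ δ) (Ioc ρ σ) := by
    apply Integrable.mono' ((integrable_const (1:ℝ)).add hHi)
    · exact (hHm.pow_const δ).aestronglyMeasurable
    · filter_upwards with r
      rw [Real.norm_of_nonneg (Real.rpow_nonneg (hH0 r) _)]
      simp only [Pi.add_apply]
      rcases le_total 1 (H r) with h | h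
      · have := Real.rpow_le_rpow_of_exponent_le h hδ1
        rw [Real.rpow_one] at this
        linarith
      · have := Real.rpow_le_one (hH0 r) h hδ0.le
        linarith [hH0 r]
  have main : ∀ ε : ℝ, 0 < ε → J ≤ (σ - ρ) ^ (-(1 + 1/δ)) *
      ((∫ r in Ioc ρ σ, H r ^ δ) + (σ - ρ) * ε ^ δ) ^ (1/δ) := by
    intro ε hε
    have hKi : IntegrableOn (fun r => H r + ε) (Ioc ρ σ) := hHi.add (integrable_const ε)
    have hKp : ∀ r, 0 < H r + ε := fun r => by linarith [hH0 r]
    have hh := oc_holder hρσ (fun r => H r + ε) ε hε (fun r => by linarith [hH0 r])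
      (hHm.add_const ε) hKi δ hδ0 hδ1
    have he := oc_extend hρσ H hH0 hHi hJ (fun r => (H r + ε)⁻¹) (hHm.add_const ε).inv
      (fun r => inv_nonneg.2 (hKp r).le) ε⁻¹ (fun r => inv_anti₀ hε (by linarith [hH0 r]))
    have hi2 : IntegrableOn (fun r => (H r + ε)⁻¹) (Ioc ρ σ) := by
      apply Integrable.mono' (integrable_const (ε⁻¹:ℝ))
      · exact (hHm.add_const ε).inv.aestronglyMeasurable
      · filter_upwards with r
        rw [Real.norm_of_nonneg (inv_nonneg.2 (hKp r).le)]
        exact inv_anti₀ hε (by linarith [hH0 r])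
    have hle : ∫ r in Ioc ρ σ, ((H r + ε)⁻¹) ^ 2 * H r ≤ ∫ r in Ioc ρ σ, (H r + ε)⁻¹ := by
      apply integral_mono_of_nonneg
      · filter_upwards with r
        exact mul_nonneg (sq_nonneg _) (hH0 r)
      · exact hi2
      · filter_upwards with r
        have h1 := hKp r
        have h2 : (H r + ε)⁻¹ * H r ≤ 1 := by
          rw [inv_mul_le_iff₀ h1]; linarith
        calc ((H r + ε)⁻¹) ^ 2 * H r = (H r + ε)⁻¹ * ((H r + ε)⁻¹ * H r) := by ring
          _ ≤ (H r + ε)⁻¹ * 1 := by gcongr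
          _ = _ := mul_one _
    set L := ∫ r in Ioc ρ σ, (H r + ε)⁻¹ with hL
    have hL0 : 0 ≤ L := integral_nonneg fun r => inv_nonneg.2 (hKp r).le
    set P := ∫ r in Ioc ρ σ, (H r + ε) ^ δ with hP
    have hP0 : 0 ≤ P := integral_nonneg fun r => Real.rpow_nonneg (hKp r).le _
    have hℓp : 0 < (σ - ρ) ^ (1 + 1/δ) := Real.rpow_pos_of_pos hℓ _
    have hLpos : 0 < L := by
      rcases hL0.eq_or_lt with h | h
      · rw [← h, mul_zero] at hh; linarith
      · exact h
    have hJL : J * L ≤ 1 := by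
      have : J * L ^ 2 ≤ L := he.trans hle
      have : (J * L) * L ≤ 1 * L := by nlinarith
      exact le_of_mul_le_mul_right this hLpos
    have hPle : P ≤ (∫ r in Ioc ρ σ, H r ^ δ) + (σ - ρ) * ε ^ δ := by
      have : (∫ r in Ioc ρ σ, H r ^ δ) + (σ - ρ) * ε ^ δ = 
          ∫ r in Ioc ρ σ, (H r ^ δ + ε ^ δ) := by
        rw [integral_add hiH (integrable_const _)]
        simp [hρσ.le]
      rw [this]
      apply integral_mono_of_nonneg
      · filter_upwards with r
        exact Real.rpow_nonneg (hKp r).le _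
      · exact hiH.add (integrable_const _)
      · filter_upwards with r
        exact Real.rpow_add_le_add_rpow (hH0 r) hε.le hδ0.le hδ1
    rw [Real.rpow_neg hℓ.le, ← div_eq_inv_mul, le_div_iff₀ hℓp]
    calc J * (σ - ρ) ^ (1 + 1/δ) ≤ J * (P ^ (1/δ) * L) := by gcongr
      _ = (J * L) * P ^ (1/δ) := by ring
      _ ≤ 1 * P ^ (1/δ) := by gcongr
      _ ≤ _ := by rw [one_mul]; gcongr
  have ht : Filter.Tendsto (fun ε : ℝ => (σ - ρ) ^ (-(1 + 1/δ)) *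
      ((∫ r in Ioc ρ σ, H r ^ δ) + (σ - ρ) * ε ^ δ) ^ (1/δ)) (nhdsWithin 0 (Ioi 0))
      (nhds ((σ - ρ) ^ (-(1 + 1/δ)) *
      ((∫ r in Ioc ρ σ, H r ^ δ) + (σ - ρ) * (0:ℝ) ^ δ) ^ (1/δ))) := by
    apply Filter.Tendsto.mono_left _ nhdsWithin_le_nhds
    have c1 : Continuous (fun ε : ℝ => ε ^ δ) := Real.continuous_rpow_const hδ0.le
    have c2 : Continuous (fun ε : ℝ => ε ^ (1/δ)) := Real.continuous_rpow_const (by positivity)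
    have : Continuous (fun ε : ℝ => (σ - ρ) ^ (-(1 + 1/δ)) *
      ((∫ r in Ioc ρ σ, H r ^ δ) + (σ - ρ) * ε ^ δ) ^ (1/δ)) :=
      continuous_const.mul (c2.comp (continuous_const.add (continuous_const.mul c1)))
    exact this.tendsto 0
  rw [Real.zero_rpow hδ0.ne', mul_zero, add_zero] at ht
  apply ge_of_tendsto ht
  filter_upwards [self_mem_nhdsWithin] with ε hε
  exact main ε hε

end oneD

section radial
variable {E : Type*} [NormedAddCommGroup E] [InnerProductSpace ℝ E] [FiniteDimensional ℝ E]
  [MeasurableSpace E] [BorelSpace E]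

open scoped Pointwise in
lemma oc_scale (m : ℕ) (v : E → ℝ) (r : ℝ) (hr : 0 < r) :
    ∫ x in sphere (0:E) r, |v x| ∂μH[(m:ℝ)] =
      r ^ m * ∫ ω : sphere (0:E) 1, |v (r • ω.1)| ∂μH[(m:ℝ)] := by
  have hemb : MeasurableEmbedding (fun ω : sphere (0:E) 1 => r • ω.1) :=
    (Homeomorph.smulOfNeZero r hr.ne').measurableEmbedding.comp
      (MeasurableEmbedding.subtype_coe isClosed_sphere.measurableSet)
  have hmeas : (μH[(m:ℝ)] : Measure E).restrict (sphere (0:E) r) =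
      ENNReal.ofReal (r ^ m) • (μH[(m:ℝ)] : Measure (sphere (0:E) 1)).map
        (fun ω : sphere (0:E) 1 => r • ω.1) := by
    ext s hs
    rw [Measure.restrict_apply hs, Measure.smul_apply, hemb.map_apply,
      ← (isometry_subtype_coe (s := sphere (0:E) 1)).hausdorffMeasure_image
        (Or.inl (by positivity))]
    have : s ∩ sphere (0:E) r =
        r • (Subtype.val '' ((fun ω : sphere (0:E) 1 => r • ω.1) ⁻¹' s)) := by
      ext x
      constructor
      · rintro ⟨h1, h2⟩
        have h2' : ‖x‖ = r := by simpa using h2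
        refine ⟨r⁻¹ • x, ⟨⟨r⁻¹ • x, ?_⟩, ?_, rfl⟩, ?_⟩
        · simp [norm_smul, h2', abs_of_pos hr, hr.ne']
        · simpa [smul_smul, hr.ne'] using h1
        · simp [smul_smul, hr.ne']
      · rintro ⟨_, ⟨ω, h1, rfl⟩, rfl⟩
        refine ⟨h1, ?_⟩
        simp [norm_smul, abs_of_pos hr]
    rw [this, Measure.hausdorffMeasure_smul₀ (by positivity) hr.ne', ENNReal.smul_def]
    congr 1
    rw [NNReal.rpow_natCast, ENNReal.coe_pow, ENNReal.ofReal_pow hr.le]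
    congr 1
    rw [← enorm_eq_nnnorm, Real.enorm_eq_ofReal hr.le]
  rw [hmeas, integral_smul_measure, hemb.integral_map, ENNReal.toReal_ofReal (by positivity)]
  rfl

lemma oc_radial {m : ℕ} (hm : 1 ≤ m) (hfr : Module.finrank ℝ E = m + 1) (σ : ℝ)
    (v : E → ℝ) (hv : IntegrableOn v (ball (0:E) σ)) :
    ∃ G : ℝ → ℝ≥0∞, Measurable G ∧ ∫⁻ r in Ioi (0:ℝ), G r ≠ ⊤ ∧
      (∀ᵐ r ∂(volume.restrict (Ioo 0 σ)),
        ∫ x in sphere (0:E) r, |v x| ∂μH[(m:ℝ)] = (G r).toReal) ∧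
      ∀ ψ : ℝ → ℝ≥0∞, Measurable ψ → 
        ∫⁻ x in ball (0:E) σ, ‖v x‖ₑ * ψ ‖x‖ ≤ ∫⁻ r in Ioi (0:ℝ), ψ r * G r := by
  obtain ⟨C, hC, hκC⟩ := oc_le_toSphere (E := E) hm hfr
  have hμκ := oc_toSphere_le (E := E) hm hfr
  set κ : Measure (sphere (0:E) 1) := μH[(m:ℝ)] with hκ
  set μ := (volume : Measure E).toSphere with hμ
  have hκfin : IsFiniteMeasure κ := ⟨by
    refine (hκC univ).trans_lt ?_
    exact ENNReal.mul_lt_top hC.lt_top (measure_lt_top _ _)⟩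
  have hac : κ ≪ μ := Measure.absolutelyContinuous_of_le_smul hκC
  set v' := hv.aestronglyMeasurable.mk v with hv'
  have hv'm : StronglyMeasurable v' := hv.aestronglyMeasurable.stronglyMeasurable_mk
  have hvv' : v =ᵐ[volume.restrict (ball (0:E) σ)] v' := hv.aestronglyMeasurable.ae_eq_mk
  let w : E → ℝ≥0∞ := (ball (0:E) σ).indicator (fun x => ‖v' x‖ₑ)
  have hwm : Measurable w := hv'm.measurable.enorm.indicator measurableSet_ball
  have hwsm : Measurable (fun p : ℝ × sphere (0:E) 1 => w (p.1 • p.2.1)) := by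
    apply hwm.comp; fun_prop
  let G : ℝ → ℝ≥0∞ := fun r => ENNReal.ofReal (r ^ m) * ∫⁻ ω, w (r • ω.1) ∂κ
  have hGm : Measurable G := by
    apply Measurable.mul (by fun_prop)
    exact hwsm.lintegral_prod_right'
  have hwfin : ∫⁻ x, w x ≠ ⊤ := by
    rw [lintegral_indicator measurableSet_ball]
    have : ∫⁻ x in ball (0:E) σ, ‖v' x‖ₑ = ∫⁻ x in ball (0:E) σ, ‖v x‖ₑ := by
      apply lintegral_congr_ae
      filter_upwards [hvv'] with x hx
      rw [hx]
    rw [this]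
    exact hv.2.ne
  have hpol : ∀ f : E → ℝ≥0∞, Measurable f → ∫⁻ x, f x = ∫⁻ r in Ioi (0:ℝ),
      ENNReal.ofReal (r ^ m) * ∫⁻ ω : sphere (0:E) 1, f (r • ω.1) ∂μ := by
    intro f hf
    have := oc_polar hfr (by omega) f hf
    simpa using this
  refine ⟨G, hGm, ?_, ?_, ?_⟩
  · have : ∫⁻ r in Ioi (0:ℝ), G r ≤ C * ∫⁻ x, w x := by
      rw [hpol w hwm, ← lintegral_const_mul' _ _ hC]
      apply lintegral_mono
      intro r
      calc G r ≤ ENNReal.ofReal (r ^ m) * ∫⁻ ω, w (r • ω.1) ∂(C • μ) := by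
            simp only [G]
            gcongr
        _ = C * (ENNReal.ofReal (r ^ m) * ∫⁻ ω, w (r • ω.1) ∂μ) := by
            rw [lintegral_smul_measure, smul_eq_mul]; ring
    exact (this.trans_lt (ENNReal.mul_lt_top hC.lt_top hwfin.lt_top)).ne
  · have hnull : volume {x | ¬ (x ∈ ball (0:E) σ → v x = v' x)} = 0 := by
      have := (ae_restrict_iff' measurableSet_ball).1 hvv'
      exact this
    obtain ⟨N, hN1, hN2, hN3⟩ := exists_measurable_superset_of_null hnull
    have h1 := hpol (N.indicator 1) (measurable_one.indicator hN2)
    rw [lintegral_indicator_one hN2, hN3] at h1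
    have hNsm : Measurable (fun p : ℝ × sphere (0:E) 1 =>
        N.indicator (1 : E → ℝ≥0∞) (p.1 • p.2.1)) := by
      apply (measurable_one.indicator hN2).comp; fun_prop
    have h2 := (lintegral_eq_zero_iff (Measurable.mul (by fun_prop)
      hNsm.lintegral_prod_right')).1 h1.symm
    have h3 : ∀ᵐ r ∂(volume.restrict (Ioo 0 σ)), _ := 
      ae_restrict_of_ae_restrict_of_subset Ioo_subset_Ioi_self h2
    filter_upwards [h3, ae_restrict_mem measurableSet_Ioo] with r h3 hr
    have hrp : ENNReal.ofReal (r ^ m) ≠ 0 := by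
      have := pow_pos hr.1 m
      simpa using this
    simp only [Pi.mul_apply, Pi.zero_apply, mul_eq_zero, hrp, false_or] at h3
    have h3' := (lintegral_eq_zero_iff
      (f := fun ω : sphere (0:E) 1 => N.indicator (1 : E → ℝ≥0∞) (r • ω.1))
      (hNsm.comp measurable_prodMk_left)).1 h3
    have h4 := hac.ae_le h3'
    have h5 : (fun ω : sphere (0:E) 1 => v (r • ω.1)) =ᵐ[κ] fun ω => v' (r • ω.1) := by
      filter_upwards [h4] with ω hω
      by_contra hne
      have hb : r • ω.1 ∈ ball (0:E) σ := by
        simp [norm_smul, abs_of_pos hr.1, hr.2]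
      have : r • ω.1 ∈ N := hN1 (by simp only [mem_ofPred_eq]; tauto)
      simp [this] at hω
    have hsm : StronglyMeasurable (fun ω : sphere (0:E) 1 => v' (r • ω.1)) := by
      apply hv'm.comp_measurable; fun_prop
    have h6 : ∫ ω : sphere (0:E) 1, |v (r • ω.1)| ∂κ = (∫⁻ ω, w (r • ω.1) ∂κ).toReal := by
      have e1 : ∫ ω : sphere (0:E) 1, |v (r • ω.1)| ∂κ = ∫ ω : sphere (0:E) 1, ‖v' (r • ω.1)‖ ∂κ := by
        apply integral_congr_ae
        filter_upwards [h5] with ω hω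
        rw [hω]; rfl
      rw [e1, integral_norm_eq_lintegral_enorm hsm.aestronglyMeasurable]
      congr 1
      apply lintegral_congr
      intro ω
      have hb : r • ω.1 ∈ ball (0:E) σ := by
        simp [norm_smul, abs_of_pos hr.1, hr.2]
      simp only [w]
      rw [indicator_of_mem hb]
    rw [oc_scale m v r hr.1, h6]
    simp only [G]
    rw [ENNReal.toReal_mul, ENNReal.toReal_ofReal (pow_nonneg hr.1.le m)]
  · intro ψ hψ
    have e1 : ∫⁻ x in ball (0:E) σ, ‖v x‖ₑ * ψ ‖x‖ = ∫⁻ x, w x * ψ ‖x‖ := by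
      rw [← lintegral_indicator measurableSet_ball] 
      have : ∀ᵐ x, x ∈ ball (0:E) σ → v x = v' x := (ae_restrict_iff' measurableSet_ball).1 hvv'
      apply lintegral_congr_ae
      filter_upwards [this] with x hx
      by_cases hb : x ∈ ball (0:E) σ
      · simp only [w]
        rw [indicator_of_mem hb, indicator_of_mem hb, hx hb]
      · simp only [w]
        rw [indicator_of_notMem hb, indicator_of_notMem hb, zero_mul]
    rw [e1, hpol (fun x => w x * ψ ‖x‖) (hwm.mul (hψ.comp measurable_norm))]
    apply setLIntegral_mono' measurableSet_Ioi
    intro r hr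
    have hr : 0 < r := hr
    have : ∀ ω : sphere (0:E) 1, w (r • ω.1) * ψ ‖r • ω.1‖ = w (r • ω.1) * ψ r := by
      intro ω; simp [norm_smul, abs_of_pos hr]
    simp only [this]
    rw [lintegral_mul_const _ (f := fun ω : sphere (0:E) 1 => w (r • ω.1))
      (hwsm.comp measurable_prodMk_left)]
    simp only [G]
    calc _ = ψ r * (ENNReal.ofReal (r ^ m) * ∫⁻ ω, w (r • ω.1) ∂μ) := by
          ring
      _ ≤ _ := by gcongr

end radial

section cutoff
variable {E : Type*} [NormedAddCommGroup E] [InnerProductSpace ℝ E]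

lemma oc_cutoff [FiniteDimensional ℝ E] {ρ σ a b : ℝ} (hρ : 0 < ρ) (ha : ρ < a) (hb : b < σ)
    (φ : ℝ → ℝ) (hφ : Continuous φ) (hφ0 : ∀ r, 0 ≤ φ r) (hφz : ∀ r, r ∉ Icc a b → φ r = 0)
    (hc : 0 < ∫ r in Ioc ρ σ, φ r) :
    ∃ η : E → ℝ, ContDiff ℝ 1 η ∧ HasCompactSupport η ∧ tsupport η ⊆ ball (0 : E) σ ∧
      (∀ x, 0 ≤ η x) ∧ (∀ x ∈ ball (0:E) ρ, η x = 1) ∧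
      ∀ x, ‖fderiv ℝ η x‖ ≤ φ ‖x‖ / ∫ r in Ioc ρ σ, φ r := by
  set c := ∫ r in Ioc ρ σ, φ r with hcdef
  have hρσ : ρ < σ := by
    by_contra h
    rw [hcdef, Ioc_eq_empty h] at hc
    simp at hc
  have hc' : c = ∫ r in ρ..σ, φ r := by
    rw [intervalIntegral.integral_of_le hρσ.le]
  have hii : ∀ p q : ℝ, IntervalIntegrable φ volume p q := fun p q => hφ.intervalIntegrable p q
  have hρz : ∀ r < a, ∫ t in r..ρ, φ t = 0 := by
    intro r hr
    rw [intervalIntegral.integral_congr (g := fun _ => 0)]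
    · simp
    · intro t ht
      apply hφz
      intro h
      have := ht.2
      have h2 := h.1
      have : t ≤ max r ρ := this
      have : max r ρ < a := max_lt hr ha
      linarith
  have hσz : ∀ r, b ≤ r → ∫ t in r..σ, φ t = 0 := by
    intro r hr
    have hz : ∀ t, b < t → φ t = 0 := fun t ht => hφz t (fun h => by linarith [h.2])
    have hzb : ∀ t, b ≤ t → φ t = 0 := by
      intro t ht
      have hcl : IsClosed {t | φ t = 0} := isClosed_eq hφ continuous_const
      have : closure (Ioi b) ⊆ {t | φ t = 0} := hcl.closure_subset_iff.2 (fun t ht => hz t ht)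
      rw [closure_Ioi] at this
      exact this ht
    rw [intervalIntegral.integral_congr (g := fun _ => 0)]
    · simp
    · intro t ht
      apply hzb
      have : min r σ ≤ t := ht.1
      exact (le_min hr hb.le).trans this
  let ζ : ℝ → ℝ := fun r => (∫ t in r..σ, φ t) / c
  have hζd : ∀ r, HasDerivAt ζ (-φ r / c) r := by
    intro r
    exact (intervalIntegral.integral_hasDerivAt_left (hii r σ)
      (hφ.stronglyMeasurableAtFilter _ _) hφ.continuousAt).div_const c
  have hζc : ContDiff ℝ 1 ζ := by
    rw [contDiff_one_iff_deriv]
    refine ⟨fun r => (hζd r).differentiableAt, ?_⟩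
    have : deriv ζ = fun r => -φ r / c := funext fun r => (hζd r).deriv
    rw [this]
    fun_prop
  have hζ1 : ∀ r < a, ζ r = 1 := by
    intro r hr
    simp only [ζ]
    rw [← intervalIntegral.integral_add_adjacent_intervals (hii r ρ) (hii ρ σ), hρz r hr,
      zero_add, ← hc', div_self hc.ne']
  have hζz : ∀ r, b ≤ r → ζ r = 0 := by
    intro r hr
    simp only [ζ]
    rw [hσz r hr, zero_div]
  have hζ0 : ∀ r, 0 ≤ ζ r := by
    intro r
    rcases le_total b r with h | h
    · exact (hζz r h).ge
    · exact div_nonneg (intervalIntegral.integral_nonneg (h.trans hb.le) fun t _ => hφ0 t) hc.le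
  have hnear : ∀ x : E, ‖x‖ < a → (fun y : E => ζ ‖y‖) =ᶠ[nhds x] fun _ => 1 := by
    intro x hx
    have : {y : E | ‖y‖ < a} ∈ nhds x := (isOpen_lt continuous_norm continuous_const).mem_nhds hx
    filter_upwards [this] with y hy
    exact hζ1 _ hy
  have hts : tsupport (fun x : E => ζ ‖x‖) ⊆ closedBall (0:E) b := by
    apply closure_minimal _ isClosed_closedBall
    intro x hx
    by_contra h
    apply hx
    apply hζz
    simp at h
    exact h.le
  refine ⟨fun x => ζ ‖x‖, ?_, ?_, ?_, fun x => hζ0 _, ?_, ?_⟩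
  · rw [contDiff_iff_contDiffAt]
    intro x
    by_cases hx : ‖x‖ < a
    · exact contDiffAt_const.congr_of_eventuallyEq (hnear x hx)
    · have hx0 : x ≠ 0 := by
        rintro rfl
        simp at hx
        linarith
      exact hζc.contDiffAt.comp x (contDiffAt_norm ℝ hx0)
  · exact HasCompactSupport.of_support_subset_isCompact (isCompact_closedBall (0:E) b)
      (subset_closure.trans hts)
  · exact hts.trans (closedBall_subset_ball hb)
  · intro x hx
    apply hζ1
    have : ‖x‖ < ρ := by simpa using hx
    linarith
  · intro x
    by_cases hx : ‖x‖ < a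
    · rw [(hnear x hx).fderiv_eq]
      simp only [fderiv_fun_const, Pi.zero_apply, norm_zero]
      exact div_nonneg (hφ0 _) hc.le
    · have hx0 : x ≠ 0 := by
        rintro rfl
        simp at hx
        linarith
      have hd : DifferentiableAt ℝ (fun y : E => ‖y‖) x :=
        (contDiffAt_norm (n := 1) ℝ hx0).differentiableAt (by norm_num)
      have h1 := (hζd ‖x‖).comp_hasFDerivAt x hd.hasFDerivAt
      have h2 : fderiv ℝ (fun x : E => ζ ‖x‖) x = _ := h1.fderiv
      rw [h2, norm_smul]
      have h3 : ‖fderiv ℝ (fun y : E => ‖y‖) x‖ ≤ 1 := by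
        have := norm_fderiv_le_of_lipschitz ℝ (f := fun y : E => ‖y‖) (x₀ := x) lipschitzWith_one_norm
        simpa using this
      have h4 : ‖-φ ‖x‖ / c‖ = φ ‖x‖ / c := by
        rw [norm_div, norm_neg, Real.norm_of_nonneg (hφ0 _), Real.norm_of_nonneg hc.le]
      rw [h4]
      exact mul_le_of_le_one_right (div_nonneg (hφ0 _) hc.le) h3

end cutoff

section energy
variable {E : Type*} [NormedAddCommGroup E] [InnerProductSpace ℝ E] [FiniteDimensional ℝ E]
  [MeasurableSpace E] [BorelSpace E]

lemma oc_energy {ρ σ a b : ℝ} (hρ : 0 < ρ) (hρσ : ρ < σ) (ha : ρ < a) (hb : b < σ)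
    (v : E → ℝ) (hv : IntegrableOn v (ball (0:E) σ))
    (φ : ℝ → ℝ) (hφ : Continuous φ) (hφ0 : ∀ r, 0 ≤ φ r) (hφz : ∀ r, r ∉ Icc a b → φ r = 0)
    (G : ℝ → ℝ≥0∞) (hGm : Measurable G) (hGf : ∫⁻ r in Ioi (0:ℝ), G r ≠ ⊤)
    (hG : ∀ ψ : ℝ → ℝ≥0∞, Measurable ψ →
        ∫⁻ x in ball (0:E) σ, ‖v x‖ₑ * ψ ‖x‖ ≤ ∫⁻ r in Ioi (0:ℝ), ψ r * G r) :
    IntegrableOn (fun x => |v x| * φ ‖x‖ ^ 2) (ball (0:E) σ) ∧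
    ∫ x in ball (0:E) σ, |v x| * φ ‖x‖ ^ 2 ≤ ∫ r in Ioc ρ σ, φ r ^ 2 * (G r).toReal := by
  obtain ⟨M, hM⟩ : ∃ M, ∀ r, ‖φ r‖ ≤ M := by
    have hcs : HasCompactSupport φ :=
      HasCompactSupport.intro (isCompact_Icc (a := a) (b := b)) hφz
    exact hcs.exists_bound_of_continuous hφ
  have hM2 : ∀ r, φ r ^ 2 ≤ M ^ 2 := fun r => by
    have := hM r
    rw [Real.norm_of_nonneg (hφ0 r)] at this
    exact pow_le_pow_left₀ (hφ0 r) this 2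
  have hIntegrable : IntegrableOn (fun x => |v x| * φ ‖x‖ ^ 2) (ball (0:E) σ) := by
    refine Integrable.mul_bdd (c := M ^ 2) hv.abs ?_ ?_
    · exact (by fun_prop : Continuous fun x : E => φ ‖x‖ ^ 2).aestronglyMeasurable
    · refine Filter.Eventually.of_forall fun x => ?_
      rw [Real.norm_of_nonneg (sq_nonneg _)]
      exact hM2 _
  refine ⟨hIntegrable, ?_⟩
  have hsub : Ioc ρ σ ⊆ Ioi (0:ℝ) := fun r hr => hρ.trans hr.1
  have hGI : ∫⁻ r in Ioc ρ σ, G r ≠ ⊤ :=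
    ((lintegral_mono_set hsub).trans_lt hGf.lt_top).ne
  have hψm : Measurable fun r => ENNReal.ofReal (φ r ^ 2) := by fun_prop
  have h1 := hG _ hψm
  have h2 : ∫⁻ r in Ioi (0:ℝ), ENNReal.ofReal (φ r ^ 2) * G r =
      ∫⁻ r in Ioc ρ σ, ENNReal.ofReal (φ r ^ 2) * G r := by
    rw [← lintegral_indicator measurableSet_Ioi, ← lintegral_indicator measurableSet_Ioc]
    apply lintegral_congr
    intro r
    by_cases hr : r ∈ Ioc ρ σ
    · rw [indicator_of_mem hr, indicator_of_mem (hsub hr)]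
    · have : φ r = 0 := hφz r fun h => hr ⟨ha.trans_le h.1, h.2.trans hb.le⟩
      rw [indicator_of_notMem hr]
      simp [indicator, this]
  have hGae : ∀ᵐ r ∂(volume.restrict (Ioc ρ σ)), G r < ⊤ := ae_lt_top hGm hGI
  have h3 : ∫⁻ r in Ioc ρ σ, ENNReal.ofReal (φ r ^ 2) * G r =
      ∫⁻ r in Ioc ρ σ, ENNReal.ofReal (φ r ^ 2 * (G r).toReal) := by
    apply lintegral_congr_ae
    filter_upwards [hGae] with r hr
    rw [ENNReal.ofReal_mul (sq_nonneg _), ENNReal.ofReal_toReal hr.ne]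
  have h3f : ∫⁻ r in Ioc ρ σ, ENNReal.ofReal (φ r ^ 2) * G r ≠ ⊤ := by
    have : ∫⁻ r in Ioc ρ σ, ENNReal.ofReal (φ r ^ 2) * G r ≤
        ENNReal.ofReal (M ^ 2) * ∫⁻ r in Ioc ρ σ, G r := by
      rw [← lintegral_const_mul _ hGm]
      apply lintegral_mono
      intro r
      have := hM2 r
      dsimp only
      gcongr
    exact (this.trans_lt (ENNReal.mul_lt_top ENNReal.ofReal_lt_top hGI.lt_top)).ne
  have h4 : ∫⁻ x in ball (0:E) σ, ‖v x‖ₑ * ENNReal.ofReal (φ ‖x‖ ^ 2) =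
      ∫⁻ x in ball (0:E) σ, ENNReal.ofReal (|v x| * φ ‖x‖ ^ 2) := by
    apply lintegral_congr
    intro x
    rw [ENNReal.ofReal_mul (abs_nonneg _), Real.enorm_eq_ofReal_abs]
  rw [integral_eq_lintegral_of_nonneg_ae
      (Filter.Eventually.of_forall fun x => mul_nonneg (abs_nonneg _) (sq_nonneg _))
      hIntegrable.aestronglyMeasurable,
    integral_eq_lintegral_of_nonneg_ae
      (Filter.Eventually.of_forall fun x => mul_nonneg (sq_nonneg _) ENNReal.toReal_nonneg)
      (by
        apply Measurable.aestronglyMeasurable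
        exact (hφ.measurable.pow_const 2).mul hGm.ennreal_toReal), ← h3, ← h4]
  exact ENNReal.toReal_mono h3f (h1.trans_eq h2)

lemma oc_main {m : ℕ} (hm : 1 ≤ m) (hfr : Module.finrank ℝ E = m + 1)
    (ρ σ : ℝ) (hρ : 0 < ρ) (hρσ : ρ < σ)
    (v : E → ℝ) (hv : IntegrableOn v (ball (0 : E) σ))
    (δ : ℝ) (hδ0 : 0 < δ) (hδ1 : δ ≤ 1) :
    sInf {J : ℝ | ∃ η : E → ℝ, ContDiff ℝ 1 η ∧
        HasCompactSupport η ∧ tsupport η ⊆ ball (0 : E) σ ∧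
        (∀ x, 0 ≤ η x) ∧ (∀ x ∈ ball (0 : E) ρ, η x = 1) ∧
        J = ∫ x in ball (0 : E) σ, |v x| * ‖fderiv ℝ η x‖ ^ 2} ≤
      (σ - ρ) ^ (-(1 + 1/δ)) *
        (∫ r in Set.Ioc ρ σ,
          (∫ x in sphere (0 : E) r, |v x| ∂μH[(m:ℝ)]) ^ δ) ^ (1/δ) := by
  obtain ⟨G, hGm, hGf, hGv, hG⟩ := oc_radial hm hfr σ v hv
  set S := {J : ℝ | ∃ η : E → ℝ, ContDiff ℝ 1 η ∧
        HasCompactSupport η ∧ tsupport η ⊆ ball (0 : E) σ ∧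
        (∀ x, 0 ≤ η x) ∧ (∀ x ∈ ball (0 : E) ρ, η x = 1) ∧
        J = ∫ x in ball (0 : E) σ, |v x| * ‖fderiv ℝ η x‖ ^ 2} with hS
  have hS0 : ∀ J ∈ S, 0 ≤ J := by
    rintro J ⟨η, -, -, -, -, -, rfl⟩
    exact integral_nonneg fun x => mul_nonneg (abs_nonneg _) (sq_nonneg _)
  have hsub : Ioc ρ σ ⊆ Ioi (0:ℝ) := fun r hr => hρ.trans hr.1
  have hGI : ∫⁻ r in Ioc ρ σ, G r ≠ ⊤ :=
    ((lintegral_mono_set hsub).trans_lt hGf.lt_top).ne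
  have key := oc_oneD hρσ (Real.sInf_nonneg hS0) (fun r => (G r).toReal)
    (fun r => ENNReal.toReal_nonneg) hGm.ennreal_toReal
    (integrable_toReal_of_lintegral_ne_top hGm.aemeasurable hGI) ?_ δ hδ0 hδ1
  · have e : ∫ r in Set.Ioc ρ σ, (∫ x in sphere (0 : E) r, |v x| ∂μH[(m:ℝ)]) ^ δ =
        ∫ r in Ioc ρ σ, (G r).toReal ^ δ := by
      apply integral_congr_ae
      have : ∀ᵐ r ∂(volume.restrict (Ioc ρ σ)),
          ∫ x in sphere (0:E) r, |v x| ∂μH[(m:ℝ)] = (G r).toReal := by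
        rw [← Measure.restrict_congr_set (Ioo_ae_eq_Ioc (a := ρ) (b := σ) (μ := volume))]
        exact ae_restrict_of_ae_restrict_of_subset (Ioo_subset_Ioo_left hρ.le) hGv
      filter_upwards [this] with r hr
      rw [hr]
    rw [e]
    exact key
  · rintro φ hφ hφ0 ⟨a, b, ha, hb, hφz⟩
    set c := ∫ r in Ioc ρ σ, φ r with hc
    have hc0 : 0 ≤ c := integral_nonneg fun r => hφ0 r
    rcases hc0.eq_or_lt with h | h
    · rw [← h]
      simp only [ne_eq, OfNat.ofNat_ne_zero, not_false_eq_true, zero_pow, mul_zero]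
      exact integral_nonneg fun x => mul_nonneg (sq_nonneg _) ENNReal.toReal_nonneg
    · obtain ⟨η, h1, h2, h3, h4, h5, h6⟩ := oc_cutoff (E := E) hρ ha hb φ hφ hφ0 hφz h
      obtain ⟨hIntegrable, hle⟩ := oc_energy hρ hρσ ha hb v hv φ hφ hφ0 hφz G hGm hGf hG
      have hmem : ∫ x in ball (0 : E) σ, |v x| * ‖fderiv ℝ η x‖ ^ 2 ∈ S :=
        ⟨η, h1, h2, h3, h4, h5, rfl⟩
      have hJ := csInf_le (show BddBelow S from ⟨0, hS0⟩) hmem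
      have hcomp : ∫ x in ball (0 : E) σ, |v x| * ‖fderiv ℝ η x‖ ^ 2 ≤
          ∫ x in ball (0 : E) σ, (|v x| * φ ‖x‖ ^ 2) * (c ^ 2)⁻¹ := by
        apply integral_mono_of_nonneg
        · exact Filter.Eventually.of_forall fun x => mul_nonneg (abs_nonneg _) (sq_nonneg _)
        · exact hIntegrable.mul_const _
        · refine Filter.Eventually.of_forall fun x => ?_
          have := pow_le_pow_left₀ (norm_nonneg _) (h6 x) 2
          dsimp only
          rw [mul_assoc]
          apply mul_le_mul_of_nonneg_left _ (abs_nonneg _)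
          rw [div_pow] at this
          exact this
      rw [integral_mul_const] at hcomp
      have h7 := hJ.trans hcomp
      have hc2 : 0 < c ^ 2 := by positivity
      rw [← div_eq_mul_inv, le_div_iff₀ hc2] at h7
      exact h7.trans hle

end energy

end helpers

/-- Optimized-cutoff lemma: the infimum of `∫ |v||∇η|²` over cutoffs `η` equal to 1 on `B_ρ`
and supported in `B_σ` is bounded by a weighted 1D quantity of the spherical integrals of `|v|`. -/
theorem optimized_cutoff (n : ℕ) (hn : 2 ≤ n) (ρ σ : ℝ) (hρ : 0 < ρ) (hρσ : ρ < σ)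
    (v : EuclideanSpace ℝ (Fin n) → ℝ)
    (hv : IntegrableOn v (ball (0 : EuclideanSpace ℝ (Fin n)) σ))
    (δ : ℝ) (hδ0 : 0 < δ) (hδ1 : δ ≤ 1) :
    sInf {J : ℝ | ∃ η : EuclideanSpace ℝ (Fin n) → ℝ, ContDiff ℝ 1 η ∧
        HasCompactSupport η ∧ tsupport η ⊆ ball (0 : EuclideanSpace ℝ (Fin n)) σ ∧
        (∀ x, 0 ≤ η x) ∧ (∀ x ∈ ball (0 : EuclideanSpace ℝ (Fin n)) ρ, η x = 1) ∧
        J = ∫ x in ball (0 : EuclideanSpace ℝ (Fin n)) σ, |v x| * ‖fderiv ℝ η x‖ ^ 2} ≤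
      (σ - ρ) ^ (-(1 + 1/δ)) *
        (∫ r in Set.Ioc ρ σ,
          (∫ x in sphere (0 : EuclideanSpace ℝ (Fin n)) r, |v x| ∂μH[(n:ℝ) - 1]) ^ δ) ^ (1/δ) := by
  obtain ⟨m, rfl⟩ : ∃ m, n = m + 1 := ⟨n - 1, by omega⟩
  have e : (((m + 1 : ℕ) : ℝ) - 1) = (m : ℝ) := by push_cast; ring
  rw [e]
  exact oc_main (by omega) finrank_euclideanSpace_fin ρ σ hρ hρσ v hv δ hδ0 hδ1
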